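/- Let λ > 0 and let ψ ∈ P^r satisfy Γ_λ(ψ) = L(1). Define the error function e(t) = exp(−λ(t−t₀)) − ψ(t) and η(t) = 1 − ∫_{t₀}^{t} exp(λ(s−t₀)) L(1)(s) ds. Then e(t₀) = 1 − ψ(t₀) > 0, and for all t ∈ I the identity exp(−λ(t−t₀)) η(t) = e(t)/e(t₀) holds. -/

import Mathlib

open Polynomial MeasureTheory intervalIntegral

/-- The rescaled Legendre polynomials on `[t₀, t₁]`: `K i` has degree `i`,
`K i (t₁) = 1`, `K i (t₀) = (-1)^i`, and they are `L²(t₀,t₁)`-orthogonal with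
`∫ K i ^ 2 = (t₁ - t₀)/(2 i + 1)`. -/
def IsLegendreBasis (t₀ t₁ : ℝ) (K : ℕ → Polynomial ℝ) : Prop :=
  (∀ i, (K i).natDegree = i) ∧ (∀ i, (K i).eval t₁ = 1) ∧
  (∀ i, (K i).eval t₀ = (-1 : ℝ) ^ i) ∧
  (∀ i j, (∫ t in t₀..t₁, (K i).eval t * (K j).eval t) =
    if i = j then (t₁ - t₀) / (2 * (i : ℝ) + 1) else 0)

/-- The lifting operator `L(z) = (z/k) ∑_{i=0}^r (-1)^i (2i+1) K_i`. -/
noncomputable def Lop (t₀ t₁ : ℝ) (r : ℕ) (K : ℕ → Polynomial ℝ) (z : ℝ) : Polynomial ℝ :=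
  Polynomial.C (z / (t₁ - t₀)) *
    ∑ i ∈ Finset.range (r + 1), Polynomial.C ((-1 : ℝ) ^ i * (2 * (i : ℝ) + 1)) * K i

/-- The endpoint lifting operator `L̂(z) = (z/k) ∑_{i=0}^r (2i+1) K_i`. -/
noncomputable def LopE (t₀ t₁ : ℝ) (r : ℕ) (K : ℕ → Polynomial ℝ) (z : ℝ) : Polynomial ℝ :=
  Polynomial.C (z / (t₁ - t₀)) *
    ∑ i ∈ Finset.range (r + 1), Polynomial.C (2 * (i : ℝ) + 1) * K i

/-- The scalar dG operator `Γ_λ(v) = v' + L(v(t₀)) + λ v`. -/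
noncomputable def Gam (t₀ t₁ : ℝ) (r : ℕ) (K : ℕ → Polynomial ℝ) (lam : ℝ)
    (v : Polynomial ℝ) : Polynomial ℝ :=
  Polynomial.derivative v + Lop t₀ t₁ r K (v.eval t₀) + Polynomial.C lam * v

/-- The dG error function `e(t) = exp(-λ (t - t₀)) - ψ(t)`. -/
noncomputable def errF (t₀ lam : ℝ) (ψ : Polynomial ℝ) (t : ℝ) : ℝ :=
  Real.exp (-lam * (t - t₀)) - ψ.eval t

/-!
Write `ℓ = L(1)`. Since `L` is linear, `ψ` solves `ψ' + λ ψ = (1 - ψ(t₀)) ℓ`, and integrating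
`(exp(λ(s-t₀)) ψ)' = (1 - ψ(t₀)) exp(λ(s-t₀)) ℓ` gives the identity as soon as `ψ(t₀) ≠ 1`.

For the sign, put `x = 1/λ` and let `w_x` be the polynomial with `w_x + x w_x' = ℓ`; then
`(1 - ψ(t₀)) (1 + x w_x(t₀)) = 1`. Testing the equation of `w_x` with `w_x` itself and using
`∫ ℓ w_x = w_x(t₀)` gives `(1 + x w_x(t₀))² = 1 + (x w_x(t₁))² + 2 x ∫ w_x²`, so that
`1 + x w_x(t₀)` does not vanish for `x ≥ 0`. It depends continuously on `x` and equals `1` at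
`x = 0`; hence it is positive.
-/

section DerivNeumann

variable {R : Type*} [CommRing R]

/-- The truncated Neumann series `∑_{j<n} (-x d/dt)^j`, which inverts `1 + x d/dt` on polynomials of
degree less than `n`. -/
noncomputable def derivNeumann (n : ℕ) (x : R) : Module.End R R[X] :=
  ∑ j ∈ Finset.range n, (-x • derivative) ^ j

lemma smul_derivative_pow_apply (x : R) (j : ℕ) (p : R[X]) :
    ((x • derivative : Module.End R R[X]) ^ j) p = x ^ j • derivative^[j] p := by
  rw [_root_.smul_pow, LinearMap.smul_apply, Module.End.pow_apply]

lemma derivNeumann_apply (n : ℕ) (x : R) (p : R[X]) :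
    derivNeumann n x p = ∑ j ∈ Finset.range n, (-x) ^ j • derivative^[j] p := by
  simp only [derivNeumann, LinearMap.sum_apply, smul_derivative_pow_apply]

lemma one_sub_neg_smul_derivative_apply (x : R) (p : R[X]) :
    (1 - -x • derivative : Module.End R R[X]) p = p + x • derivative p := by
  simp

lemma natDegree_derivNeumann_le (n : ℕ) (x : R) (p : R[X]) :
    (derivNeumann n x p).natDegree ≤ p.natDegree := by
  rw [derivNeumann_apply]
  refine natDegree_sum_le_of_forall_le _ _ fun j _ => ?_
  exact (natDegree_smul_le _ _).trans ((natDegree_iterate_derivative p j).trans (Nat.sub_le _ _))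

variable {n : ℕ} {p : R[X]}

lemma smul_derivative_pow_apply_eq_zero (hp : p.natDegree < n) (x : R) :
    ((x • derivative : Module.End R R[X]) ^ n) p = 0 := by
  rw [smul_derivative_pow_apply, iterate_derivative_eq_zero hp, smul_zero]

lemma derivNeumann_add_smul_derivative (hp : p.natDegree < n) (x : R) :
    derivNeumann n x p + x • derivative (derivNeumann n x p) = p := by
  rw [← one_sub_neg_smul_derivative_apply, derivNeumann, ← Module.End.mul_apply,
    mul_neg_geom_sum, LinearMap.sub_apply, Module.End.one_apply,
    smul_derivative_pow_apply_eq_zero hp, sub_zero]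

lemma derivNeumann_apply_add_smul_derivative (hp : p.natDegree < n) (x : R) :
    derivNeumann n x (p + x • derivative p) = p := by
  rw [← one_sub_neg_smul_derivative_apply, derivNeumann, ← Module.End.mul_apply,
    geom_sum_mul_neg, LinearMap.sub_apply, Module.End.one_apply,
    smul_derivative_pow_apply_eq_zero hp, sub_zero]

lemma continuous_eval_derivNeumann [TopologicalSpace R] [IsTopologicalRing R] (n : ℕ) (p : R[X])
    (t : R) : Continuous fun x => (derivNeumann n x p).eval t := by
  simp only [derivNeumann_apply, eval_finsetSum, eval_smul, smul_eq_mul]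
  fun_prop

end DerivNeumann

section Integrals

variable (p q : ℝ[X]) (a b : ℝ)

lemma intervalIntegrable_eval_mul_eval :
    IntervalIntegrable (fun t => p.eval t * q.eval t) volume a b :=
  (p.continuous.mul q.continuous).intervalIntegrable a b

lemma integral_eval_mul_eval_derivative :
    ∫ t in a..b, p.eval t * (derivative p).eval t = (p.eval b ^ 2 - p.eval a ^ 2) / 2 := by
  have h_deriv : ∀ t ∈ Set.uIcc a b, HasDerivAt (fun t => p.eval t ^ 2 / 2)
      (p.eval t * (derivative p).eval t) t := fun t _ =>
    (((p.hasDerivAt t).pow 2).div_const 2).congr_deriv (by norm_num; ring)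
  rw [integral_eq_sub_of_hasDerivAt h_deriv (intervalIntegrable_eval_mul_eval _ _ a b), sub_div]

lemma integral_exp_mul_eval_derivative_add (lam c : ℝ) :
    ∫ s in a..b, Real.exp (lam * (s - c)) * (derivative p + C lam * p).eval s =
      Real.exp (lam * (b - c)) * p.eval b - Real.exp (lam * (a - c)) * p.eval a := by
  refine integral_eq_sub_of_hasDerivAt
    (f := fun s => Real.exp (lam * (s - c)) * p.eval s) (fun s _ => ?_) ?_
  · have h_lin : HasDerivAt (fun s => lam * (s - c)) lam s := by
      simpa using ((hasDerivAt_id s).sub_const c).const_mul lam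
    refine (h_lin.exp.mul (p.hasDerivAt s)).congr_deriv ?_
    simp only [eval_add, eval_mul, eval_C]
    ring
  · exact Continuous.intervalIntegrable (by fun_prop) a b

end Integrals

/-- `ℓ` is the Riesz representer of the evaluation at `a` on the polynomials of degree at most `r`,
with respect to the inner product of `L²(a, b)`. -/
structure IsLeftEvalRepresenter (a b : ℝ) (r : ℕ) (ℓ : ℝ[X]) : Prop where
  natDegree_le : ℓ.natDegree ≤ r
  integral_mul : ∀ v : ℝ[X], v.natDegree ≤ r → ∫ t in a..b, ℓ.eval t * v.eval t = v.eval a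

namespace IsLeftEvalRepresenter

variable {a b : ℝ} {r : ℕ} {ℓ : ℝ[X]}

lemma sq_one_add_mul_eval (hℓ : IsLeftEvalRepresenter a b r ℓ) {w : ℝ[X]} (hw : w.natDegree ≤ r)
    {x : ℝ} (hwx : w + x • derivative w = ℓ) :
    (1 + x * w.eval a) ^ 2 =
      1 + (x * w.eval b) ^ 2 + 2 * x * ∫ t in a..b, w.eval t * w.eval t := by
  have h_test : w.eval a =
      (∫ t in a..b, w.eval t * w.eval t) + x * ((w.eval b ^ 2 - w.eval a ^ 2) / 2) := calc
    w.eval a = ∫ t in a..b, ℓ.eval t * w.eval t := (hℓ.integral_mul w hw).symm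
    _ = ∫ t in a..b, (w.eval t * w.eval t + x * (w.eval t * (derivative w).eval t)) := by
      congr! 2 with t
      rw [← hwx, eval_add, eval_smul, smul_eq_mul]
      ring
    _ = _ := by
      rw [intervalIntegral.integral_add (intervalIntegrable_eval_mul_eval _ _ _ _)
        ((intervalIntegrable_eval_mul_eval _ _ _ _).const_mul x),
        intervalIntegral.integral_const_mul, integral_eval_mul_eval_derivative]
  linear_combination 2 * x * h_test

lemma one_add_mul_eval_derivNeumann_ne_zero (hab : a ≤ b) (hℓ : IsLeftEvalRepresenter a b r ℓ)
    {x : ℝ} (hx : 0 ≤ x) : 1 + x * (derivNeumann (r + 1) x ℓ).eval a ≠ 0 := by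
  have h_energy := hℓ.sq_one_add_mul_eval
    ((natDegree_derivNeumann_le (r + 1) x ℓ).trans hℓ.natDegree_le)
    (derivNeumann_add_smul_derivative (Nat.lt_succ_of_le hℓ.natDegree_le) x)
  set w := derivNeumann (r + 1) x ℓ
  have h_norm : 0 ≤ ∫ t in a..b, w.eval t * w.eval t :=
    intervalIntegral.integral_nonneg hab fun t _ => mul_self_nonneg (w.eval t)
  refine pow_ne_zero_iff two_ne_zero |>.1 (ne_of_gt ?_)
  rw [h_energy]
  positivity

lemma one_add_mul_eval_derivNeumann_pos (hab : a ≤ b) (hℓ : IsLeftEvalRepresenter a b r ℓ)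
    {x : ℝ} (hx : 0 ≤ x) : 0 < 1 + x * (derivNeumann (r + 1) x ℓ).eval a := by
  by_contra! h_nonpos
  have h_cont : Continuous fun y => 1 + y * (derivNeumann (r + 1) y ℓ).eval a :=
    continuous_const.add (continuous_id.mul (continuous_eval_derivNeumann _ ℓ a))
  obtain ⟨y, hy, hy_zero⟩ :=
    intermediate_value_Icc' hx h_cont.continuousOn ⟨h_nonpos, by simp⟩
  exact hℓ.one_add_mul_eval_derivNeumann_ne_zero hab hy.1 hy_zero

lemma eval_lt_one (hab : a ≤ b) (hℓ : IsLeftEvalRepresenter a b r ℓ) {lam : ℝ} (hlam : 0 < lam)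
    {ψ : ℝ[X]} (hψdeg : ψ.natDegree ≤ r)
    (hψ : derivative ψ + C lam * ψ = C (1 - ψ.eval a) * ℓ) : ψ.eval a < 1 := by
  have h_resolvent : ψ + lam⁻¹ • derivative ψ = (lam⁻¹ * (1 - ψ.eval a)) • ℓ := by
    rw [mul_smul, smul_eq_C_mul (1 - ψ.eval a), ← hψ, smul_add, ← smul_eq_C_mul,
      inv_smul_smul₀ hlam.ne', add_comm]
  have h_eval : ψ.eval a =
      lam⁻¹ * (1 - ψ.eval a) * (derivNeumann (r + 1) lam⁻¹ ℓ).eval a := by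
    conv_lhs => rw [← derivNeumann_apply_add_smul_derivative (Nat.lt_succ_of_le hψdeg) lam⁻¹,
      h_resolvent, map_smul, eval_smul, smul_eq_mul]
  have h_mul : (1 - ψ.eval a) * (1 + lam⁻¹ * (derivNeumann (r + 1) lam⁻¹ ℓ).eval a) = 1 := by
    linear_combination -h_eval
  have h_pos := hℓ.one_add_mul_eval_derivNeumann_pos hab (inv_nonneg.2 hlam.le)
  exact sub_pos.1 (pos_of_mul_pos_left (one_pos.trans_eq h_mul.symm) h_pos.le)

end IsLeftEvalRepresenter

namespace IsLegendreBasis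

variable {t₀ t₁ : ℝ} {K : ℕ → ℝ[X]}

lemma endpoints_ne (hK : IsLegendreBasis t₀ t₁ K) : t₀ ≠ t₁ := by
  obtain ⟨-, h_right, h_left, -⟩ := hK
  rintro rfl
  have := (h_left 1).symm.trans (h_right 1)
  norm_num at this

lemma span_eq_degreeLE (hK : IsLegendreBasis t₀ t₁ K) (r : ℕ) :
    Submodule.span ℝ (K '' Set.Iic r) = degreeLE ℝ r := by
  obtain ⟨h_natDegree, h_right, -, -⟩ := hK
  have h_ne (i : ℕ) : K i ≠ 0 := fun h => by simpa [h] using h_right i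
  let S : Polynomial.Sequence ℝ :=
    ⟨K, fun i => by rw [degree_eq_natDegree (h_ne i), h_natDegree i]⟩
  exact S.span_degreeLE fun i _ => (leadingCoeff_ne_zero.2 (S.ne_zero i)).isUnit

lemma integral_Lop_one_mul (hK : IsLegendreBasis t₀ t₁ K) {r j : ℕ} (hj : j ≤ r) :
    ∫ t in t₀..t₁, (Lop t₀ t₁ r K 1).eval t * (K j).eval t = (K j).eval t₀ := by
  have h_len : t₁ - t₀ ≠ 0 := sub_ne_zero.2 hK.endpoints_ne.symm
  obtain ⟨-, -, h_left, h_orth⟩ := hK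
  calc ∫ t in t₀..t₁, (Lop t₀ t₁ r K 1).eval t * (K j).eval t
      = ∫ t in t₀..t₁, 1 / (t₁ - t₀) * ∑ i ∈ Finset.range (r + 1),
          ((-1 : ℝ) ^ i * (2 * (i : ℝ) + 1)) * ((K i).eval t * (K j).eval t) := by
        simp only [Lop, eval_mul, eval_C, eval_finsetSum, Finset.sum_mul, mul_assoc]
    _ = 1 / (t₁ - t₀) * ∑ i ∈ Finset.range (r + 1), ((-1 : ℝ) ^ i * (2 * (i : ℝ) + 1)) *
          ∫ t in t₀..t₁, (K i).eval t * (K j).eval t := by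
        rw [intervalIntegral.integral_const_mul, intervalIntegral.integral_finsetSum fun i _ =>
          (intervalIntegrable_eval_mul_eval _ _ _ _).const_mul _]
        simp only [intervalIntegral.integral_const_mul]
    _ = 1 / (t₁ - t₀) * ((-1 : ℝ) ^ j * (2 * (j : ℝ) + 1) *
          ((t₁ - t₀) / (2 * (j : ℝ) + 1))) := by
        simp only [h_orth, mul_ite, mul_zero, Finset.sum_ite_eq', Finset.mem_range,
          Nat.lt_succ_of_le hj, if_true]
    _ = (K j).eval t₀ := by
        rw [h_left]
        field_simp

lemma natDegree_Lop_le (hK : IsLegendreBasis t₀ t₁ K) (r : ℕ) (z : ℝ) :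
    (Lop t₀ t₁ r K z).natDegree ≤ r := by
  refine (natDegree_C_mul_le _ _).trans (natDegree_sum_le_of_forall_le _ _ fun i hi => ?_)
  refine (natDegree_C_mul_le _ _).trans ?_
  rw [hK.1 i]
  exact Nat.lt_succ_iff.1 (Finset.mem_range.1 hi)

lemma isLeftEvalRepresenter_Lop_one (hK : IsLegendreBasis t₀ t₁ K) (r : ℕ) :
    IsLeftEvalRepresenter t₀ t₁ r (Lop t₀ t₁ r K 1) := by
  refine ⟨hK.natDegree_Lop_le r 1, fun v hv => ?_⟩
  have hv_span : v ∈ Submodule.span ℝ (K '' Set.Iic r) := by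
    rw [hK.span_eq_degreeLE]
    exact mem_degreeLE.2 (natDegree_le_iff_degree_le.1 hv)
  clear hv
  induction hv_span using Submodule.span_induction with
  | mem v hv =>
    obtain ⟨j, hj, rfl⟩ := hv
    exact hK.integral_Lop_one_mul hj
  | zero => simp
  | add p q _ _ hp hq =>
    simp only [eval_add, mul_add]
    rw [intervalIntegral.integral_add (intervalIntegrable_eval_mul_eval _ _ _ _)
      (intervalIntegrable_eval_mul_eval _ _ _ _), hp, hq]
  | smul c p _ hp =>
    simp only [eval_smul, smul_eq_mul, mul_left_comm _ c]
    rw [intervalIntegral.integral_const_mul, hp]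

end IsLegendreBasis

section ErrorIdentity

variable {t₀ t₁ lam : ℝ}

lemma Lop_eq_C_mul (t₀ t₁ : ℝ) (r : ℕ) (K : ℕ → ℝ[X]) (z : ℝ) :
    Lop t₀ t₁ r K z = C z * Lop t₀ t₁ r K 1 := by
  rw [Lop, Lop, ← mul_assoc, ← C_mul, mul_one_div]

lemma derivative_add_C_mul_of_Gam_eq {r : ℕ} {K : ℕ → ℝ[X]} {ψ : ℝ[X]}
    (hψ : Gam t₀ t₁ r K lam ψ = Lop t₀ t₁ r K 1) :
    derivative ψ + C lam * ψ = C (1 - ψ.eval t₀) * Lop t₀ t₁ r K 1 := by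
  rw [Gam, Lop_eq_C_mul] at hψ
  rw [C_sub, C_1]
  linear_combination hψ

lemma errF_left (t₀ lam : ℝ) (ψ : ℝ[X]) : errF t₀ lam ψ t₀ = 1 - ψ.eval t₀ := by
  simp [errF]

lemma exp_mul_one_sub_integral_eq_errF_div {ψ ℓ : ℝ[X]}
    (hψ : derivative ψ + C lam * ψ = C (1 - ψ.eval t₀) * ℓ) (h_ne : ψ.eval t₀ ≠ 1) (t : ℝ) :
    Real.exp (-lam * (t - t₀)) * (1 - ∫ s in t₀..t, Real.exp (lam * (s - t₀)) * ℓ.eval s) =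
      errF t₀ lam ψ t / errF t₀ lam ψ t₀ := by
  have h_integral : (1 - ψ.eval t₀) * ∫ s in t₀..t, Real.exp (lam * (s - t₀)) * ℓ.eval s =
      Real.exp (lam * (t - t₀)) * ψ.eval t - ψ.eval t₀ := by
    simpa [hψ, mul_left_comm _ (1 - ψ.eval t₀)] using
      integral_exp_mul_eval_derivative_add ψ t₀ t lam t₀
  have h_exp : Real.exp (-lam * (t - t₀)) * Real.exp (lam * (t - t₀)) = 1 := by
    rw [← Real.exp_add, neg_mul, neg_add_cancel, Real.exp_zero]
  rw [errF_left, eq_div_iff (sub_ne_zero.2 h_ne.symm), errF]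
  linear_combination -Real.exp (-lam * (t - t₀)) * h_integral - ψ.eval t * h_exp

end ErrorIdentity

/-- `e(t₀) = 1 - ψ(t₀) > 0` and `exp(-λ(t-t₀)) η(t) = e(t)/e(t₀)` on `I`, where
`η(t) = 1 - ∫_{t₀}^t exp(λ(s-t₀)) L(1)(s) ds` and `e(t) = exp(-λ(t-t₀)) - ψ(t)`. -/
theorem stmt_11 (t₀ t₁ : ℝ) (ht : t₀ < t₁) (r : ℕ) (K : ℕ → Polynomial ℝ)
    (hK : IsLegendreBasis t₀ t₁ K) (lam : ℝ) (hlam : 0 < lam)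
    (ψ : Polynomial ℝ) (hψdeg : ψ.natDegree ≤ r)
    (hψ : Gam t₀ t₁ r K lam ψ = Lop t₀ t₁ r K 1) :
    (errF t₀ lam ψ t₀ = 1 - ψ.eval t₀ ∧ 0 < errF t₀ lam ψ t₀) ∧
    ∀ t ∈ Set.Ioc t₀ t₁,
      Real.exp (-lam * (t - t₀)) *
          (1 - ∫ s in t₀..t, Real.exp (lam * (s - t₀)) * (Lop t₀ t₁ r K 1).eval s)
        = errF t₀ lam ψ t / errF t₀ lam ψ t₀ := by
  have h_ode := derivative_add_C_mul_of_Gam_eq hψ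
  have h_lt : ψ.eval t₀ < 1 :=
    (hK.isLeftEvalRepresenter_Lop_one r).eval_lt_one ht.le hlam hψdeg h_ode
  have h_left := errF_left t₀ lam ψ
  exact ⟨⟨h_left, h_left ▸ sub_pos.2 h_lt⟩,
    fun t _ => exp_mul_one_sub_integral_eq_errF_div h_ode h_lt.ne t⟩
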